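/- For integers n ≥ 1 and 0 ≤ t < p ≤ n, the following binomial identity holds: ∑_{s=t+1}^{p} (-1)^{s-t} · C(n,s) · C(s-1,t) · C(n-1-s, p-s) = (-1)^{p-t} · C(n-1,t) - C(n-1,p), where C denotes the ordinary binomial coefficient. -/

import Mathlib

open Polynomial Finset

/-- The Gaussian binomial coefficient as a polynomial in `ℤ[q]`,
defined via the q-Pascal recursion; it is `0` when `b > a`. -/
noncomputable def qbinom : ℕ → ℕ → Polynomial ℤ
  | _, 0 => 1
  | 0, _ + 1 => 0
  | a + 1, b + 1 => X ^ (b + 1) * qbinom a (b + 1) + qbinom a b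

/-!
A function `f` with vanishing `(p + 1)`-st differences is determined by its values at the nodes
`0, …, p`, and for `n ≥ p` its value at `n` is
`f n = ∑_{s ≤ p} (-1)^(p - s) C(n, s) C(n - 1 - s, p - s) f s`:
insert the explicit formula for the differences of `f` into Newton's interpolation formula, and
sum the coefficient of each `f s` as a partial alternating row sum of Pascal's triangle.

The identity is this formula for `f s = C(s - 1, t)`, a polynomial in `s` of degree `t < p`. It
vanishes at the nodes `1, …, t` but equals `C(-1, t) = (-1)^t` at the node `0`, and this node
produces the term `C(n - 1, p)`.
-/

section Extrapolation

theorem sum_Icc_neg_one_pow_mul_choose_mul_choose {n p s : ℕ} (hs : s ≤ p) (hp : p ≤ n) :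
    ∑ j ∈ Icc s p, (-1 : ℤ) ^ (j - s) * n.choose j * j.choose s =
      (-1) ^ (p - s) * n.choose s * (n - 1 - s).choose (p - s) := by
  have trinomial_revision (i : ℕ) :
      ((n.choose (s + i) : ℤ) * (s + i).choose s) = n.choose s * (n - s).choose i := by
    exact_mod_cast (by simpa using Nat.choose_mul (n := n) (Nat.le_add_right s i))
  have partial_row_sum : ∑ i ∈ range (p - s + 1), (-1 : ℤ) ^ i * (n - s).choose i =
      (-1) ^ (p - s) * (n - 1 - s).choose (p - s) := by
    obtain hsn | hsn := (hs.trans hp).eq_or_lt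
    · simp [show p - s = 0 by lia]
    · rw [show n - s = n - 1 - s + 1 by lia, Int.alternating_sum_range_choose_eq_choose]
  calc ∑ j ∈ Icc s p, (-1 : ℤ) ^ (j - s) * n.choose j * j.choose s
      = ∑ i ∈ range (p - s + 1), n.choose s * ((-1 : ℤ) ^ i * (n - s).choose i) := by
        rw [← Ico_add_one_right_eq_Icc, sum_Ico_eq_sum_range, Nat.sub_add_comm hs]
        refine sum_congr rfl fun i _ ↦ ?_
        rw [Nat.add_sub_cancel_left, mul_assoc, trinomial_revision, mul_left_comm]
    _ = (-1) ^ (p - s) * n.choose s * (n - 1 - s).choose (p - s) := by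
        rw [← mul_sum, partial_row_sum]
        ring

variable {M G : Type*} [AddCommMonoid M] [AddCommGroup G] (h : M) (f : M → G) (y : M)

theorem fwdDiff_iter_zero (n : ℕ) : (fwdDiff h)^[n] (0 : M → G) = 0 :=
  Function.iterate_fixed (fwdDiff_const h 0) n

theorem sum_choose_smul_fwdDiff_iter_eq_sum_shift {n p : ℕ} (hp : p ≤ n) :
    ∑ j ∈ range (p + 1), n.choose j • (fwdDiff h)^[j] f y =
      ∑ s ∈ range (p + 1),
        ((-1 : ℤ) ^ (p - s) * n.choose s * (n - 1 - s).choose (p - s)) • f (y + s • h) := by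
  calc ∑ j ∈ range (p + 1), n.choose j • (fwdDiff h)^[j] f y
      = ∑ j ∈ range (p + 1), ∑ s ∈ range (j + 1),
          ((-1 : ℤ) ^ (j - s) * n.choose j * j.choose s) • f (y + s • h) := by
        refine sum_congr rfl fun j _ ↦ ?_
        rw [fwdDiff_iter_eq_sum_shift, ← natCast_zsmul, smul_sum]
        exact sum_congr rfl fun s _ ↦ by rw [smul_smul, mul_left_comm, mul_assoc]
    _ = ∑ s ∈ range (p + 1), ∑ j ∈ Icc s p,
          ((-1 : ℤ) ^ (j - s) * n.choose j * j.choose s) • f (y + s • h) :=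
        sum_comm' fun j s ↦ by simp only [mem_range, mem_Icc]; lia
    _ = _ := by
        refine sum_congr rfl fun s hs ↦ ?_
        rw [← sum_smul,
          sum_Icc_neg_one_pow_mul_choose_mul_choose (mem_range_succ_iff.mp hs) hp]

variable {h f}

theorem shift_eq_sum_range_fwdDiff_iter_of_eq_zero {d : ℕ} (hf : (fwdDiff h)^[d] f = 0) (n : ℕ) :
    f (y + n • h) = ∑ j ∈ range d, n.choose j • (fwdDiff h)^[j] f y := by
  have fwdDiff_iter_eq_zero (j : ℕ) (hj : j ≥ d) : n.choose j • (fwdDiff h)^[j] f y = 0 := by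
    obtain ⟨i, rfl⟩ := Nat.exists_eq_add_of_le' hj
    rw [Function.iterate_add_apply, hf, fwdDiff_iter_zero, Pi.zero_apply, smul_zero]
  have choose_smul_eq_zero (j : ℕ) (hj : j ≥ n + 1) : n.choose j • (fwdDiff h)^[j] f y = 0 := by
    rw [Nat.choose_eq_zero_of_lt hj, zero_smul]
  rw [shift_eq_sum_fwdDiff_iter h f n y,
    ← eventually_constant_sum choose_smul_eq_zero (le_max_left (n + 1) d),
    eventually_constant_sum fwdDiff_iter_eq_zero (le_max_right (n + 1) d)]

theorem shift_eq_sum_shift_of_fwdDiff_iter_eq_zero {n p : ℕ} (hf : (fwdDiff h)^[p + 1] f = 0)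
    (hp : p ≤ n) :
    f (y + n • h) = ∑ s ∈ range (p + 1),
      ((-1 : ℤ) ^ (p - s) * n.choose s * (n - 1 - s).choose (p - s)) • f (y + s • h) := by
  rw [shift_eq_sum_range_fwdDiff_iter_of_eq_zero y hf,
    sum_choose_smul_fwdDiff_iter_eq_sum_shift h f y hp]

end Extrapolation

section RingChoose

variable {R : Type*} [Ring R] [BinomialRing R]

theorem fwdDiff_ringChoose_succ (k : ℕ) :
    fwdDiff 1 (fun r : R ↦ Ring.choose r (k + 1)) = fun r ↦ Ring.choose r k := by
  ext r
  rw [fwdDiff, Ring.choose_succ_succ, add_sub_cancel_right]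

theorem fwdDiff_iter_ringChoose_eq_zero {k m : ℕ} (hkm : k < m) :
    (fwdDiff 1)^[m] (fun r : R ↦ Ring.choose r k) = 0 := by
  obtain ⟨m, rfl⟩ := Nat.exists_eq_add_one_of_ne_zero (Nat.ne_zero_of_lt hkm)
  rw [Function.iterate_succ_apply]
  induction k generalizing m with
  | zero =>
    simp only [Ring.choose_zero_right, fwdDiff_const]
    exact fwdDiff_iter_zero 1 m
  | succ k ih =>
    obtain ⟨m, rfl⟩ := Nat.exists_eq_add_one_of_ne_zero (show m ≠ 0 by lia)
    rw [fwdDiff_ringChoose_succ, Function.iterate_succ_apply, ih m (by lia)]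

theorem ringChoose_neg_one (k : ℕ) : Ring.choose (-1 : R) k = (-1) ^ k := by
  induction k with
  | zero => rw [Ring.choose_zero_right, pow_zero]
  | succ k ih =>
    have pascal := Ring.choose_succ_succ (-1 : R) k
    rw [neg_add_cancel, Ring.choose_zero_succ, ih] at pascal
    rw [pow_succ, mul_neg_one, eq_neg_of_add_eq_zero_right pascal.symm]

theorem ringChoose_add_natCast_eq_sum (r : R) {n p t : ℕ} (ht : t ≤ p) (hp : p ≤ n) :
    Ring.choose (r + n) t = ∑ s ∈ range (p + 1),
      ((-1 : ℤ) ^ (p - s) * n.choose s * (n - 1 - s).choose (p - s)) • Ring.choose (r + s) t := by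
  simpa only [nsmul_one] using shift_eq_sum_shift_of_fwdDiff_iter_eq_zero r
    (fwdDiff_iter_ringChoose_eq_zero (Nat.lt_succ_of_le ht)) hp

theorem ringChoose_neg_one_add_succ (s t : ℕ) :
    Ring.choose (-1 + (s + 1 : ℕ) : R) t = s.choose t := by
  rw [Nat.cast_succ, add_comm, add_neg_cancel_right, Ring.choose_natCast]

end RingChoose

theorem sum_Icc_neg_one_pow_mul_choose_mul_choose_pred {n p t : ℕ} (ht : t < p) (hp : p ≤ n) :
    ∑ s ∈ Icc (t + 1) p,
        (-1 : ℤ) ^ (p - s) * n.choose s * (n - 1 - s).choose (p - s) * (s - 1).choose t =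
      (n - 1).choose t - (-1) ^ (p - t) * (n - 1).choose p := by
  have extrapolation := ringChoose_add_natCast_eq_sum (-1 : ℤ) ht.le hp
  have value_at_n : Ring.choose (-1 + n : ℤ) t = (n - 1).choose t := by
    rw [← ringChoose_neg_one_add_succ, Nat.sub_add_cancel (by lia)]
  have sign_at_zero : (-1 : ℤ) ^ p * (-1) ^ t = (-1) ^ (p - t) := by
    rw [← pow_add]
    exact neg_one_pow_congr (by grind)
  have drop_vanishing_nodes :
      ∑ s ∈ Icc (t + 1) p,
          (-1 : ℤ) ^ (p - s) * n.choose s * (n - 1 - s).choose (p - s) * (s - 1).choose t =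
        ∑ s ∈ range p, (-1 : ℤ) ^ (p - (s + 1)) * n.choose (s + 1) *
          (n - 1 - (s + 1)).choose (p - (s + 1)) * s.choose t := by
    rw [← Ico_add_one_right_eq_Icc, ← sum_Ico_add']
    refine sum_subset (fun s hs ↦ by simp_all) fun s hs hst ↦ ?_
    have hs_lt : s < t := by simp_all
    rw [add_tsub_cancel_right, Nat.choose_eq_zero_of_lt hs_lt, Nat.cast_zero, mul_zero]
  rw [value_at_n, sum_range_succ'] at extrapolation
  simp only [smul_eq_mul, ringChoose_neg_one_add_succ, Nat.cast_zero, add_zero,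
    ringChoose_neg_one, Nat.choose_zero_right, Nat.cast_one, mul_one, Nat.sub_zero]
    at extrapolation
  rw [drop_vanishing_nodes, extrapolation, ← sign_at_zero]
  ring

/-- The key binomial identity (3.8) of the paper. -/
theorem binomial_identity (n p t : ℕ) (hn : 1 ≤ n) (ht : t < p) (hp : p ≤ n) :
    ∑ s ∈ Finset.Icc (t + 1) p,
        (-1 : ℤ) ^ (s - t) * (n.choose s) * ((s - 1).choose t) * ((n - 1 - s).choose (p - s)) =
      (-1 : ℤ) ^ (p - t) * ((n - 1).choose t) - ((n - 1).choose p) := by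
  have sign_sq : (-1 : ℤ) ^ (p - t) * (-1) ^ (p - t) = 1 := by
    rw [← mul_pow, neg_one_mul, neg_neg, one_pow]
  calc ∑ s ∈ Icc (t + 1) p,
        (-1 : ℤ) ^ (s - t) * (n.choose s) * ((s - 1).choose t) * ((n - 1 - s).choose (p - s))
      = (-1) ^ (p - t) * ∑ s ∈ Icc (t + 1) p,
          (-1 : ℤ) ^ (p - s) * n.choose s * (n - 1 - s).choose (p - s) * (s - 1).choose t := by
        rw [mul_sum]
        refine sum_congr rfl fun s hs ↦ ?_
        obtain ⟨hts, hsp⟩ := mem_Icc.mp hs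
        have sign : (-1 : ℤ) ^ (p - t) * (-1) ^ (p - s) = (-1) ^ (s - t) := by
          rw [← pow_add]
          exact neg_one_pow_congr (by grind)
        rw [← sign]
        ring
    _ = (-1) ^ (p - t) * ((n - 1).choose t) - ((n - 1).choose p) := by
        rw [sum_Icc_neg_one_pow_mul_choose_mul_choose_pred ht hp]
        linear_combination -((n - 1).choose p : ℤ) * sign_sq
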